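/- For r ∈ (0,1) and θ ∈ (0, 2π) define p(r,θ) = 2√r·cos(θ/2) and q(r,θ) = −2√r·(θ·cos(θ/2) + (log r − 2)·sin(θ/2)). Then (∂p/∂r)·(∂q/∂θ) − (∂p/∂θ)·(∂q/∂r) = −log r. Equivalently, 2 dp ∧ dq = −2 log r · dr ∧ dθ, so (p,q) are Darboux coordinates for the Kähler form of the metric g = −|z|^{-1} log|z| |dz|² on the slit punctured disc. -/

import Mathlib

open Real Set

/-- `p(r,θ) = 2√r cos(θ/2)`, the real part of the special coordinate `Z = 2√z`. -/
noncomputable def pCoord (r θ : ℝ) : ℝ := 2 * Real.sqrt r * Real.cos (θ / 2)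

/-- `q(r,θ) = −2√r (θ cos(θ/2) + (log r − 2) sin(θ/2))`, minus the real part of `W`. -/
noncomputable def qCoord (r θ : ℝ) : ℝ :=
  -2 * Real.sqrt r * (θ * Real.cos (θ / 2) + (Real.log r - 2) * Real.sin (θ / 2))

/-!
In the logarithmic coordinate `ζ = log z`, the special coordinates `Z = 2 exp (ζ / 2)` and
`W = -2i exp (ζ / 2) (ζ - 2)` are entire, and `dW = τ dZ` with `τ = -i ζ`. The Cauchy–Riemann
equations turn the Jacobian of `(Re Z, -Re W)` with respect to `(log r, θ)` into `|Z'|² Im τ`.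
Here `|Z'|² = r` and `Im τ = -log r`, and passing from `log r` to `r` divides the Jacobian by `r`.
-/

/-- The logarithm `log r + i θ` of the point with polar coordinates `(r, θ)`. The angle is not
reduced modulo `2π`, so for `r > 0` this parametrises the universal cover of the punctured plane. -/
noncomputable def logPolar (r θ : ℝ) : ℂ := Real.log r + θ * Complex.I

/-- The special holomorphic coordinate `Z = 2√z`, as a function of `ζ = log z`. -/
noncomputable def specialZ (ζ : ℂ) : ℂ := 2 * Complex.exp (ζ / 2)

/-- The conjugate special holomorphic coordinate `W = -2i√z (log z - 2)`, as a function of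
`ζ = log z`. -/
noncomputable def specialW (ζ : ℂ) : ℂ := -2 * Complex.I * Complex.exp (ζ / 2) * (ζ - 2)

section LogPolar

variable {r θ : ℝ}

@[simp]
theorem logPolar_re (r θ : ℝ) : (logPolar r θ).re = Real.log r := by
  simp [logPolar]

theorem hasDerivAt_logPolar_radius (hr : r ≠ 0) :
    HasDerivAt (fun s => logPolar s θ) ((r⁻¹ : ℝ) : ℂ) r :=
  (Real.hasDerivAt_log hr).ofReal_comp.add_const _

theorem hasDerivAt_logPolar_angle : HasDerivAt (logPolar r) Complex.I θ := by
  have hlin := ((hasDerivAt_id θ).ofReal_comp.mul_const Complex.I).const_add (Real.log r : ℂ)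
  simp only [Complex.ofReal_one, one_mul] at hlin
  exact hlin

theorem exp_logPolar_div_two (hr : 0 < r) (θ : ℝ) :
    Complex.exp (logPolar r θ / 2) =
      √r * (Real.cos (θ / 2) + Real.sin (θ / 2) * Complex.I) := by
  have hsqrt : Real.exp (Real.log r / 2) = √r := by
    rw [Real.exp_half, Real.exp_log hr]
  have hsplit : logPolar r θ / 2 =
      ((Real.log r / 2 : ℝ) : ℂ) + ((θ / 2 : ℝ) : ℂ) * Complex.I := by
    simp only [logPolar]
    push_cast
    ring
  rw [hsplit, Complex.exp_add, Complex.exp_mul_I, ← Complex.ofReal_exp, hsqrt,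
    ← Complex.ofReal_cos, ← Complex.ofReal_sin]

theorem norm_exp_logPolar_div_two_sq (hr : 0 < r) (θ : ℝ) :
    ‖Complex.exp (logPolar r θ / 2)‖ ^ 2 = r := by
  rw [Complex.norm_exp, Complex.div_ofNat_re, logPolar_re, Real.exp_half, Real.exp_log hr,
    Real.sq_sqrt hr.le]

end LogPolar

section Jacobian

variable {u : ℝ → ℝ} {p q : ℝ → ℝ → ℝ} {F G : ℂ → ℂ} {F' τ : ℂ} {r θ : ℝ}

theorem hasDerivAt_radius_of_eq_re (hu : ∀ s > 0, u s = (F (logPolar s θ)).re)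
    (hr : 0 < r) (hF : HasDerivAt F F' (logPolar r θ)) :
    HasDerivAt u (F'.re / r) r := by
  have hre : HasDerivAt (fun s => (F (logPolar s θ)).re) (F' * (r⁻¹ : ℝ)).re r :=
    Complex.reCLM.hasFDerivAt.comp_hasDerivAt r (hF.comp r (hasDerivAt_logPolar_radius hr.ne'))
  rw [Complex.re_mul_ofReal, ← div_eq_mul_inv] at hre
  refine hre.congr_of_eventuallyEq ?_
  filter_upwards [Ioi_mem_nhds hr] with s hs using hu s hs

theorem hasDerivAt_angle_of_eq_re (hu : ∀ φ, u φ = (F (logPolar r φ)).re)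
    (hF : HasDerivAt F F' (logPolar r θ)) : HasDerivAt u (-F'.im) θ := by
  have hre : HasDerivAt (fun φ => (F (logPolar r φ)).re) (F' * Complex.I).re θ :=
    Complex.reCLM.hasFDerivAt.comp_hasDerivAt θ (hF.comp θ hasDerivAt_logPolar_angle)
  rwa [Complex.mul_I_re, ← funext hu] at hre

theorem jacobian_re_neg_re_of_hasDerivAt
    (hp : ∀ s > 0, ∀ φ, p s φ = (F (logPolar s φ)).re)
    (hq : ∀ s > 0, ∀ φ, q s φ = -(G (logPolar s φ)).re) (hr : 0 < r)
    (hF : HasDerivAt F F' (logPolar r θ)) (hG : HasDerivAt G (τ * F') (logPolar r θ)) :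
    deriv (fun s => p s θ) r * deriv (q r) θ - deriv (p r) θ * deriv (fun s => q s θ) r =
      ‖F'‖ ^ 2 * τ.im / r := by
  have hq' : ∀ s > 0, ∀ φ, q s φ = ((-G) (logPolar s φ)).re := hq
  rw [(hasDerivAt_radius_of_eq_re (hp · · θ) hr hF).deriv,
    (hasDerivAt_angle_of_eq_re (hq' r hr) hG.neg).deriv,
    (hasDerivAt_angle_of_eq_re (hp r hr) hF).deriv,
    (hasDerivAt_radius_of_eq_re (hq' · · θ) hr hG.neg).deriv,
    Complex.sq_norm, Complex.normSq_apply]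
  simp only [Complex.neg_re, Complex.neg_im, Complex.mul_re, Complex.mul_im]
  ring

end Jacobian

section SpecialCoordinates

variable {r : ℝ}

theorem hasDerivAt_specialZ (ζ : ℂ) : HasDerivAt specialZ (Complex.exp (ζ / 2)) ζ := by
  have hexp := ((hasDerivAt_id ζ).div_const 2).cexp
  refine (hexp.const_mul 2).congr_deriv ?_
  simp only [id_eq]
  ring

theorem hasDerivAt_specialW (ζ : ℂ) :
    HasDerivAt specialW (-Complex.I * ζ * Complex.exp (ζ / 2)) ζ := by
  have hexp := ((hasDerivAt_id ζ).div_const 2).cexp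
  refine ((hexp.const_mul (-2 * Complex.I)).mul ((hasDerivAt_id ζ).sub_const 2)).congr_deriv ?_
  simp only [id_eq]
  ring

theorem pCoord_eq_re_specialZ (hr : 0 < r) (θ : ℝ) :
    pCoord r θ = (specialZ (logPolar r θ)).re := by
  rw [specialZ, exp_logPolar_div_two hr]
  simp [pCoord, mul_assoc, -Complex.ofReal_cos, -Complex.ofReal_sin]

theorem qCoord_eq_neg_re_specialW (hr : 0 < r) (θ : ℝ) :
    qCoord r θ = -(specialW (logPolar r θ)).re := by
  have hcartesian : specialW (logPolar r θ) =
      ((-qCoord r θ : ℝ) : ℂ) + ((2 * √r * (θ * Real.sin (θ / 2) -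
        (Real.log r - 2) * Real.cos (θ / 2)) : ℝ) : ℂ) * Complex.I := by
    rw [specialW, exp_logPolar_div_two hr, logPolar, qCoord]
    push_cast
    ring_nf
    simp only [Complex.I_sq, Complex.I_pow_three]
    ring
  rw [hcartesian, Complex.add_re, Complex.ofReal_re, Complex.re_ofReal_mul, Complex.I_re, mul_zero,
    add_zero, neg_neg]

end SpecialCoordinates

theorem stmt8_general {r : ℝ} (hr : 0 < r) (θ : ℝ) :
    deriv (fun r' => pCoord r' θ) r * deriv (fun θ' => qCoord r θ') θ
      - deriv (fun θ' => pCoord r θ') θ * deriv (fun r' => qCoord r' θ) r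
      = -Real.log r := by
  have him : (-Complex.I * logPolar r θ).im = -Real.log r := by simp
  rw [jacobian_re_neg_re_of_hasDerivAt (fun _ => pCoord_eq_re_specialZ)
    (fun _ => qCoord_eq_neg_re_specialW) hr (hasDerivAt_specialZ _) (hasDerivAt_specialW _),
    norm_exp_logPolar_div_two_sq hr, him, mul_div_cancel_left₀ _ hr.ne']

theorem stmt8 :
    ∀ r ∈ Ioo (0 : ℝ) 1, ∀ θ ∈ Ioo (0 : ℝ) (2 * π),
      deriv (fun r' => pCoord r' θ) r * deriv (fun θ' => qCoord r θ') θ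
        - deriv (fun θ' => pCoord r θ') θ * deriv (fun r' => qCoord r' θ) r
        = -Real.log r := by
  intro r hr θ _
  exact stmt8_general hr.1 θ
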